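/- Let n ≥ 3 be odd and let v = n(n+1)k' + 2(n+1) for a non-negative integer k'. Then a (K_2,K_{1,n})-URD(v;1,s) exists, where s = (v−2)(n+1)/(2n). -/

import Mathlib

/-- The edge set of the star with center `p.1` and leaf set `p.2`. -/
def starEdgeSet {V : Type*} [DecidableEq V] (p : V × Finset V) : Finset (Sym2 V) :=
  p.2.image (fun l => s(p.1, l))

/-- `P` is a family of vertex-disjoint `n`-stars (each given by a center and a set of
`n` leaves) whose vertex sets partition the whole vertex set. -/
def IsStarFactorFamily {V : Type*} [Fintype V] [DecidableEq V] (n : ℕ)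
    (P : Finset (V × Finset V)) : Prop :=
  (∀ p ∈ P, p.2.card = n ∧ p.1 ∉ p.2) ∧
  (∀ x : V, ∃! p, p ∈ P ∧ (x = p.1 ∨ x ∈ p.2))

/-- `E` is the edge set of a `K_{1,n}`-factor of the complete graph on `V`. -/
def IsStarFactor {V : Type*} [Fintype V] [DecidableEq V] (n : ℕ)
    (E : Finset (Sym2 V)) : Prop :=
  ∃ P : Finset (V × Finset V), IsStarFactorFamily n P ∧ E = P.biUnion starEdgeSet

/-- `E` is the edge set of a perfect matching (a `1`-factor, i.e. a `K_2`-factor). -/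
def IsOneFactor {V : Type*} [Fintype V] [DecidableEq V] (E : Finset (Sym2 V)) : Prop :=
  (∀ e ∈ E, ¬ e.IsDiag) ∧ ∀ x : V, ∃! e, e ∈ E ∧ x ∈ e

/-- A `(K_2, K_{1,n})`-URD`(v; r, s)`: a partition of the edge set of the complete graph
`K_v` into `r` classes that are `1`-factors and `s` classes that are `K_{1,n}`-factors. -/
def IsURD (n v r s : ℕ) : Prop :=
  ∃ (M : Fin r → Finset (Sym2 (Fin v))) (F : Fin s → Finset (Sym2 (Fin v))),
    (∀ i, IsOneFactor (M i)) ∧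
    (∀ j, IsStarFactor n (F j)) ∧
    (∀ i j, i ≠ j → Disjoint (M i) (M j)) ∧
    (∀ i j, i ≠ j → Disjoint (F i) (F j)) ∧
    (∀ i j, Disjoint (M i) (F j)) ∧
    (∀ e : Sym2 (Fin v),
      (e ∈ Finset.univ.biUnion M ∪ Finset.univ.biUnion F) ↔ ¬ e.IsDiag)

/-!
Arrange the vertices in `n + 1` rows, each a copy of a cyclic group `G`. A perfect matching and `s`
star factors have altogether as many edges as `K_v`, so it is enough that they cover all edges.

The translates of a transversal of the rows, made into stars centred in row `i`, form a star factor
covering one difference between row `i` and every other row. As the differences are arbitrary, a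
supply of such factors for each row fills in whatever differences between distinct rows are still
missing, and only their number matters.

The differences inside the rows come from the matching, given by translation by an involution, and
from one base star factor that is developed through `G`. It consists of stars placed in the same way
in every row, and of a star with centre `(0, ξ)` and leaves `(t, -ξ)` for each group element `ξ` not
used by the former. The latter stars contribute the differences `-2ξ` between row `0` and the
others, which must be distinct. To match them, all rows but row `0` are read with the opposite sign,
which is harmless since differences inside a row matter only up to sign.

For even `k'`, the order of `G` is even and its involution gives the matching. For odd `k'`, the
order is odd and the matching joins opposite rows; one more star per row, with some leaves in other
rows, supplies for the other pairs of rows the one difference that the count still lacks.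
-/

open Finset Function

section Counting

theorem pairwise_disjoint_of_sum_card_le {ι α : Type*} [Fintype ι] [DecidableEq α]
    {A : ι → Finset α} (h : ∑ i, #(A i) ≤ #(univ.biUnion A)) : Pairwise (Disjoint on A) := by
  have hinj : Set.InjOn Sigma.snd (univ.sigma A : Set (Σ _ : ι, α)) := by
    refine injOn_of_surjOn_of_card_le (t := univ.biUnion A) _ (fun p hp ↦ ?_) (fun a ha ↦ ?_) ?_
    · exact mem_biUnion.2 ⟨p.1, mem_univ _, (mem_sigma.1 hp).2⟩
    · obtain ⟨i, -, hi⟩ := mem_biUnion.1 ha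
      exact ⟨⟨i, a⟩, mem_sigma.2 ⟨mem_univ _, hi⟩, rfl⟩
    · rwa [card_sigma]
  intro i j hij
  refine disjoint_left.2 fun a hi hj ↦ hij ?_
  exact congrArg Sigma.fst (@hinj ⟨i, a⟩ (by simpa using hi) ⟨j, a⟩ (by simpa using hj) rfl)

end Counting

section Factors

variable {V W ι : Type*} [DecidableEq V] [DecidableEq W] {n : ℕ}

/-- The edges of the indexed family of `n`-stars `P`: the star `P a` has centre `P a 0` and
leaves `P a t` for `t ≠ 0`. -/
def starEdges [Fintype ι] (P : ι → Fin (n + 1) → V) : Finset (Sym2 V) :=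
  univ.image fun p : ι × Fin n ↦ s(P p.1 0, P p.1 p.2.succ)

theorem mem_starEdges [Fintype ι] {P : ι → Fin (n + 1) → V} {e : Sym2 V} :
    e ∈ starEdges P ↔ ∃ a, ∃ t ≠ 0, s(P a 0, P a t) = e := by
  simp only [starEdges, mem_image, mem_univ, true_and, Prod.exists]
  refine exists_congr fun a ↦ ⟨fun ⟨t, ht⟩ ↦ ⟨t.succ, t.succ_ne_zero, ht⟩, ?_⟩
  rintro ⟨t, ht, rfl⟩
  obtain ⟨u, rfl⟩ := Fin.exists_succ_eq.2 ht
  exact ⟨u, rfl⟩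

theorem isStarFactor_starEdges [Fintype V] [Fintype ι] {P : ι → Fin (n + 1) → V}
    (hP : Bijective fun p : ι × Fin (n + 1) ↦ P p.1 p.2) : IsStarFactor n (starEdges P) := by
  have hinj {a b t u} (h : P a t = P b u) : a = b ∧ t = u :=
    Prod.ext_iff.1 (hP.1 (a₁ := (a, t)) (a₂ := (b, u)) h)
  have hmem (a x) : (x = P a 0 ∨ x ∈ univ.image fun t : Fin n ↦ P a t.succ) ↔
      ∃ t, P a t = x := by
    simp [Fin.exists_fin_succ, eq_comm]
  refine ⟨univ.image fun a ↦ (P a 0, univ.image fun t : Fin n ↦ P a t.succ), ⟨?_, fun x ↦ ?_⟩, ?_⟩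
  · simp only [mem_image, mem_univ, true_and, forall_exists_index, forall_apply_eq_imp_iff]
    refine fun a ↦ ⟨?_, ?_⟩
    · rw [card_image_of_injective _ fun t u h ↦ Fin.succ_injective _ (hinj h).2, card_fin]
    · rintro ⟨t, ht⟩
      exact t.succ_ne_zero (hinj ht).2
  · obtain ⟨⟨a, t⟩, rfl⟩ := hP.2 x
    refine ⟨_, ⟨mem_image_of_mem _ (mem_univ a), (hmem a _).2 ⟨t, rfl⟩⟩, ?_⟩
    rintro _ ⟨hb, hx⟩
    obtain ⟨b, -, rfl⟩ := mem_image.1 hb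
    obtain ⟨u, hu⟩ := (hmem b _).1 hx
    rw [(hinj hu).1]
  · ext e
    simp [starEdges, starEdgeSet]

theorem isOneFactor_image_of_involutive [Fintype V] {μ : V → V} (hμ : Involutive μ)
    (hfix : ∀ x, μ x ≠ x) : IsOneFactor (univ.image fun x ↦ s(x, μ x)) := by
  refine ⟨?_, fun x ↦ ⟨s(x, μ x), ⟨mem_image_of_mem _ (mem_univ x), Sym2.mem_mk_left _ _⟩, ?_⟩⟩
  · simpa using fun x ↦ (hfix x).symm
  · rintro _ ⟨he, hx⟩
    obtain ⟨y, -, rfl⟩ := mem_image.1 he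
    rcases Sym2.mem_iff.1 hx with rfl | rfl
    · rfl
    · rw [hμ, Sym2.eq_swap]

theorem IsOneFactor.two_mul_card_le [Fintype V] {E : Finset (Sym2 V)} (hE : IsOneFactor E) :
    2 * #E ≤ Fintype.card V := by
  have hdisj : (E : Set (Sym2 V)).PairwiseDisjoint Sym2.toFinset := by
    refine fun e he f hf hef ↦ disjoint_left.2 fun x hxe hxf ↦ hef ?_
    exact (hE.2 x).unique ⟨he, Sym2.mem_toFinset.1 hxe⟩ ⟨hf, Sym2.mem_toFinset.1 hxf⟩
  calc 2 * #E = ∑ e ∈ E, #e.toFinset := by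
        rw [sum_congr rfl fun e he ↦ Sym2.card_toFinset_of_not_isDiag e (hE.1 e he)]
        simp [mul_comm]
    _ = #(E.biUnion Sym2.toFinset) := (card_biUnion hdisj).symm
    _ ≤ Fintype.card V := card_le_univ _

theorem IsStarFactor.not_isDiag [Fintype V] {E : Finset (Sym2 V)} (hE : IsStarFactor n E)
    {e : Sym2 V} (he : e ∈ E) : ¬ e.IsDiag := by
  obtain ⟨P, hP, rfl⟩ := hE
  obtain ⟨p, hp, he⟩ := mem_biUnion.1 he
  obtain ⟨l, hl, rfl⟩ := mem_image.1 he
  rw [Sym2.mk_isDiag_iff]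
  rintro rfl
  exact (hP.1 p hp).2 hl

theorem IsStarFactor.card_mul_le [Fintype V] {E : Finset (Sym2 V)} (hE : IsStarFactor n E) :
    #E * (n + 1) ≤ n * Fintype.card V := by
  obtain ⟨P, hP, rfl⟩ := hE
  have hdisj : (P : Set (V × Finset V)).PairwiseDisjoint fun p ↦ insert p.1 p.2 := by
    refine fun p hp q hq hpq ↦ disjoint_left.2 fun x hxp hxq ↦ hpq ?_
    exact (hP.2 x).unique ⟨hp, mem_insert.1 hxp⟩ ⟨hq, mem_insert.1 hxq⟩
  have hstars : #P * (n + 1) ≤ Fintype.card V :=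
    calc #P * (n + 1) = ∑ p ∈ P, #(insert p.1 p.2) := by
          rw [sum_congr rfl fun p hp ↦ (card_insert_of_notMem (hP.1 p hp).2).trans
            (congrArg (· + 1) (hP.1 p hp).1)]
          simp
      _ = #(P.biUnion fun p ↦ insert p.1 p.2) := (card_biUnion hdisj).symm
      _ ≤ Fintype.card V := card_le_univ _
  have hedges : #(P.biUnion starEdgeSet) ≤ #P * n :=
    card_biUnion_le_card_mul _ _ _ fun p hp ↦ card_image_le.trans (hP.1 p hp).1.le
  nlinarith

theorem IsOneFactor.map [Fintype V] [Fintype W] {E : Finset (Sym2 V)} (hE : IsOneFactor E)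
    (φ : V ≃ W) : IsOneFactor (E.image (Sym2.map φ)) := by
  refine ⟨?_, fun x ↦ ?_⟩
  · simp only [mem_image, forall_exists_index, and_imp, forall_apply_eq_imp_iff₂]
    exact fun e he ↦ (Sym2.isDiag_map φ.injective).not.2 (hE.1 e he)
  · obtain ⟨e, ⟨he, hx⟩, huniq⟩ := hE.2 (φ.symm x)
    refine ⟨e.map φ, ⟨mem_image_of_mem _ he, Sym2.mem_map.2 ⟨_, hx, φ.apply_symm_apply x⟩⟩, ?_⟩
    rintro _ ⟨hf, hxf⟩
    obtain ⟨f, hfE, rfl⟩ := mem_image.1 hf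
    obtain ⟨y, hy, rfl⟩ := Sym2.mem_map.1 hxf
    rw [huniq f ⟨hfE, by simpa using hy⟩]

theorem IsStarFactor.map [Fintype V] [Fintype W] {E : Finset (Sym2 V)} (hE : IsStarFactor n E)
    (φ : V ≃ W) : IsStarFactor n (E.image (Sym2.map φ)) := by
  obtain ⟨P, ⟨hstar, hpart⟩, rfl⟩ := hE
  refine ⟨P.image (Prod.map φ (image φ)), ⟨?_, fun x ↦ ?_⟩, ?_⟩
  · simp only [mem_image, forall_exists_index, and_imp, forall_apply_eq_imp_iff₂]
    intro p hp
    simpa [card_image_of_injective _ φ.injective] using hstar p hp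
  · obtain ⟨p, ⟨hp, hx⟩, huniq⟩ := hpart (φ.symm x)
    have hmem (q : V × Finset V) : (x = φ q.1 ∨ x ∈ q.2.image φ) ↔
        φ.symm x = q.1 ∨ φ.symm x ∈ q.2 := by
      simp [φ.symm_apply_eq, ← φ.eq_symm_apply]
    refine ⟨_, ⟨mem_image_of_mem _ hp, (hmem p).2 hx⟩, ?_⟩
    rintro _ ⟨hq, hxq⟩
    obtain ⟨q, hqP, rfl⟩ := mem_image.1 hq
    rw [huniq q ⟨hqP, (hmem q).1 hxq⟩]
  · simp [biUnion_image, image_biUnion, starEdgeSet, image_image, comp_def]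

end Factors

section Cover

variable {V I : Type*} [Fintype V] [DecidableEq V] [Fintype I] {n : ℕ} {M : Finset (Sym2 V)}
  {F : I → Finset (Sym2 V)}

theorem isURD_of_partition (hM : IsOneFactor M) (hF : ∀ i, IsStarFactor n (F i))
    (hMF : ∀ i, Disjoint M (F i)) (hFF : Pairwise (Disjoint on F))
    (hcov : ∀ x y, x ≠ y → s(x, y) ∈ M ∨ ∃ i, s(x, y) ∈ F i) :
    IsURD n (Fintype.card V) 1 (Fintype.card I) := by
  have φ := Fintype.equivFin V
  have ψ := Fintype.equivFin I
  have hφ : Injective (Sym2.map φ) := Sym2.map.injective φ.injective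
  refine ⟨fun _ ↦ M.image (Sym2.map φ), fun j ↦ (F (ψ.symm j)).image (Sym2.map φ),
    fun _ ↦ hM.map φ, fun j ↦ (hF _).map φ, fun i j hij ↦ (hij (Subsingleton.elim i j)).elim,
    fun i j hij ↦ (disjoint_image hφ).2 (hFF (ψ.symm.injective.ne hij)),
    fun _ j ↦ (disjoint_image hφ).2 (hMF _), fun e ↦ ?_⟩
  induction e with | _ x y
  simp only [mem_union, mem_biUnion, mem_univ, true_and]
  constructor
  · rintro (⟨-, he⟩ | ⟨j, he⟩)
    · exact (hM.map φ).1 _ he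
    · exact ((hF _).map φ).not_isDiag he
  · intro hxy
    have himage : s(x, y) = s(φ.symm x, φ.symm y).map φ := by simp
    rw [himage]
    refine (hcov _ _ (φ.symm.injective.ne hxy)).imp (fun h ↦ ⟨0, mem_image_of_mem _ h⟩) ?_
    rintro ⟨i, h⟩
    exact ⟨ψ i, mem_image_of_mem _ (by simpa using h)⟩

theorem isURD_of_cover (hM : IsOneFactor M) (hF : ∀ i, IsStarFactor n (F i))
    (hcount : 2 * n * Fintype.card I + 2 * (n + 1) = (n + 1) * Fintype.card V)
    (hcov : ∀ x y, x ≠ y → s(x, y) ∈ M ∨ ∃ i, s(x, y) ∈ F i) :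
    IsURD n (Fintype.card V) 1 (Fintype.card I) := by
  -- The sizes of the factors add up to the number of edges, so a cover leaves no room for overlaps.
  let A : Option I → Finset (Sym2 V) := fun o ↦ o.elim M F
  have hA : Fintype.card {e : Sym2 V // ¬ e.IsDiag} ≤ #(univ.biUnion A) := by
    rw [Fintype.card_subtype]
    refine card_le_card fun e he ↦ mem_biUnion.2 ?_
    induction e with | _ x y
    rcases hcov x y (mem_filter.1 he).2 with h | ⟨i, h⟩
    exacts [⟨none, mem_univ _, h⟩, ⟨some i, mem_univ _, h⟩]
  have hsum : ∑ o, #(A o) ≤ Fintype.card {e : Sym2 V // ¬ e.IsDiag} := by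
    rw [Fintype.sum_option, Sym2.card_subtype_not_diag]
    change #M + ∑ i, #(F i) ≤ _
    have hstars : (∑ i, #(F i)) * (n + 1) ≤ Fintype.card I * (n * Fintype.card V) := by
      rw [sum_mul, ← smul_eq_mul (Fintype.card I)]
      exact sum_le_card_nsmul _ _ _ fun i _ ↦ (hF i).card_mul_le
    have hchoose : 2 * (Fintype.card V).choose 2 + Fintype.card V =
        Fintype.card V * Fintype.card V := by
      have h : 2 * ((Fintype.card V).choose 2 : ℚ) + Fintype.card V =
          Fintype.card V * Fintype.card V := by rw [Nat.cast_choose_two]; ring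
      exact_mod_cast h
    have := hM.two_mul_card_le
    nlinarith
  have hdisj := pairwise_disjoint_of_sum_card_le (hsum.trans hA)
  exact isURD_of_partition hM hF (fun i ↦ hdisj (Option.some_ne_none i).symm)
    (hdisj.comp_of_injective (Option.some_injective I)) hcov

end Cover

section RowStars

variable {n : ℕ} {G : Type*} [AddCommGroup G]

/-- The `n`-stars centred in row `i` whose vertex sets are the translates of the transversal
`{(j, f j)}` of the rows. -/
def rowStars (i : Fin (n + 1)) (f : Fin (n + 1) → G) : G → Fin (n + 1) → Fin (n + 1) × G :=
  fun y t ↦ (i + t, y + f (i + t))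

theorem rowStars_bijective (i : Fin (n + 1)) (f : Fin (n + 1) → G) :
    Bijective fun p : G × Fin (n + 1) ↦ rowStars i f p.1 p.2 := by
  refine bijective_iff_has_inverse.2 ⟨fun q ↦ (q.2 - f q.1, q.1 - i), fun p ↦ ?_, fun q ↦ ?_⟩ <;>
    simp [rowStars]

theorem mem_starEdges_rowStars [Fintype G] [DecidableEq G] {i j : Fin (n + 1)}
    {f : Fin (n + 1) → G} {y z : G} (hji : j ≠ i) (h : f j - f i = z - y) :
    s((i, y), (j, z)) ∈ starEdges (rowStars i f) := by
  refine mem_starEdges.2 ⟨y - f i, j - i, sub_ne_zero.2 hji, ?_⟩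
  simp [rowStars, sub_add_eq_add_sub, add_sub_assoc, h]

theorem exists_coe_subset_range {α β : Type*} [Fintype α] [Nonempty β] {T : Finset β}
    (hT : #T ≤ Fintype.card α) : ∃ g : α → β, (T : Set β) ⊆ Set.range g := by
  obtain ⟨φ⟩ := Embedding.nonempty_of_card_le ((Fintype.card_coe T).trans_le hT)
  exact ⟨extend φ Subtype.val fun _ ↦ Classical.arbitrary β,
    fun b hb ↦ ⟨φ ⟨b, hb⟩, φ.injective.extend_apply _ _ _⟩⟩

theorem exists_rowShifts [Fintype G] (x : Fin (n + 1) → ℕ)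
    (U : Fin (n + 1) → Fin (n + 1) → Finset G)
    (hU : ∀ i j, i < j → Fintype.card G ≤ x i + x j + #(U i j)) :
    ∃ f : ∀ i, Fin (x i) → Fin (n + 1) → G, (∀ i a, f i a i = 0) ∧
      ∀ i j, i < j → ∀ δ ∉ U i j, (∃ a, f i a j = δ) ∨ ∃ a, f j a i = -δ := by
  classical
  have hcover (i j : Fin (n + 1)) : ∃ g : Fin (x i) ⊕ Fin (x j) → G,
      i < j → ∀ δ ∉ U i j, ∃ a, g a = δ := by
    by_cases hij : i < j
    · have hcard : #(U i j)ᶜ ≤ Fintype.card (Fin (x i) ⊕ Fin (x j)) := by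
        rw [card_compl, Fintype.card_sum, Fintype.card_fin, Fintype.card_fin]
        have := hU i j hij
        omega
      obtain ⟨g, hg⟩ := exists_coe_subset_range hcard
      exact ⟨g, fun _ δ hδ ↦ hg (mem_coe.2 (mem_compl.2 hδ))⟩
    · exact ⟨0, fun h ↦ (hij h).elim⟩
  choose g hg using hcover
  refine ⟨fun i a j ↦ if i < j then g i j (.inl a) else if j < i then -g j i (.inr a) else 0,
    by simp, fun i j hij δ hδ ↦ ?_⟩
  obtain ⟨a | a, rfl⟩ := hg i j hij δ hδ
  · exact .inl ⟨a, by simp [hij]⟩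
  · exact .inr ⟨a, by simp [hij, hij.not_gt]⟩

theorem isURD_of_rows [Fintype G] [DecidableEq G] {I : Type*} [Fintype I]
    {M : Finset (Sym2 (Fin (n + 1) × G))} {F : I → Finset (Sym2 (Fin (n + 1) × G))}
    (hM : IsOneFactor M) (hF : ∀ a, IsStarFactor n (F a)) (x : Fin (n + 1) → ℕ)
    (U : Fin (n + 1) → Fin (n + 1) → Finset G)
    (hU : ∀ i j, i < j → Fintype.card G ≤ x i + x j + #(U i j))
    (hcount : 2 * (n * (Fintype.card I + ∑ i, x i) + (n + 1)) =
      (n + 1) * ((n + 1) * Fintype.card G))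
    (hpure : ∀ i y z, y ≠ z → s((i, y), (i, z)) ∈ M ∨ ∃ a, s((i, y), (i, z)) ∈ F a)
    (hcross : ∀ i j, i < j → ∀ δ ∈ U i j, ∀ y,
      s((i, y), (j, y + δ)) ∈ M ∨ ∃ a, s((i, y), (j, y + δ)) ∈ F a) :
    IsURD n ((n + 1) * Fintype.card G) 1 (Fintype.card I + ∑ i, x i) := by
  obtain ⟨f, hf0, hf⟩ := exists_rowShifts x U hU
  let F' : I ⊕ (Σ i, Fin (x i)) → Finset (Sym2 (Fin (n + 1) × G)) :=
    Sum.elim F fun p ↦ starEdges (rowStars p.1 (f p.1 p.2))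
  have hcov_lt (i j : Fin (n + 1)) (hij : i < j) (y z : G) :
      s((i, y), (j, z)) ∈ M ∨ ∃ a, s((i, y), (j, z)) ∈ F' a := by
    by_cases hδ : z - y ∈ U i j
    · have := hcross i j hij _ hδ y
      rw [add_sub_cancel] at this
      exact this.imp_right fun ⟨a, ha⟩ ↦ ⟨.inl a, ha⟩
    · rcases hf i j hij _ hδ with ⟨a, ha⟩ | ⟨a, ha⟩
      · refine .inr ⟨.inr ⟨i, a⟩, mem_starEdges_rowStars hij.ne' ?_⟩
        rw [ha, hf0, sub_zero]
      · refine .inr ⟨.inr ⟨j, a⟩, Sym2.eq_swap ▸ mem_starEdges_rowStars hij.ne ?_⟩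
        rw [ha, hf0, sub_zero, neg_sub]
  have hcov (p q : Fin (n + 1) × G) (hpq : p ≠ q) : s(p, q) ∈ M ∨ ∃ a, s(p, q) ∈ F' a := by
    obtain ⟨⟨i, y⟩, j, z⟩ := p, q
    rcases lt_trichotomy i j with hij | rfl | hij
    · exact hcov_lt i j hij y z
    · refine (hpure i y z fun h ↦ hpq (congrArg _ h)).imp_right fun ⟨a, ha⟩ ↦ ⟨.inl a, ha⟩
    · simpa only [Sym2.eq_swap] using hcov_lt j i hij z y
  have hF' : ∀ a, IsStarFactor n (F' a) := by
    rintro (a | ⟨i, a⟩)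
    exacts [hF a, isStarFactor_starEdges (rowStars_bijective _ _)]
  have h := isURD_of_cover hM hF' (by simp; linarith) hcov
  simpa using h

end RowStars

section Development

variable {n : ℕ} {G A : Type*} [AddCommGroup G] {P : A → Fin (n + 1) → Fin (n + 1) × G}
  {i j : Fin (n + 1)} {δ : G}

/-- Some edge of the stars `P` joins a vertex `(i, y)` to the vertex `(j, y + δ)`; the translates
of `P` then cover all edges of this kind. -/
def SpansDiff (P : A → Fin (n + 1) → Fin (n + 1) × G) (i j : Fin (n + 1)) (δ : G) : Prop :=
  ∃ y a, ∃ t ≠ 0, s(P a 0, P a t) = s((i, y), (j, y + δ))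

theorem SpansDiff.symm (h : SpansDiff P i j δ) : SpansDiff P j i (-δ) := by
  obtain ⟨y, a, t, ht, h⟩ := h
  exact ⟨y + δ, a, t, ht, by rw [h, Sym2.eq_swap, add_neg_cancel_right]⟩

theorem spansDiff_sub {a : A} {t : Fin (n + 1)} (ht : t ≠ 0) :
    SpansDiff P (P a 0).1 (P a t).1 ((P a t).2 - (P a 0).2) :=
  ⟨(P a 0).2, a, t, ht, by rw [add_sub_cancel]⟩

/-- The translate of the stars `P` by `g`, acting inside each row. -/
def develop (P : A → Fin (n + 1) → Fin (n + 1) × G) (g : G) :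
    A → Fin (n + 1) → Fin (n + 1) × G :=
  fun a t ↦ P a t + (0, g)

theorem develop_bijective (hP : Bijective fun p : A × Fin (n + 1) ↦ P p.1 p.2) (g : G) :
    Bijective fun p : A × Fin (n + 1) ↦ develop P g p.1 p.2 :=
  (Equiv.addRight (0, g)).bijective.comp hP

theorem SpansDiff.exists_mem_starEdges_develop [Fintype A] [DecidableEq G]
    (h : SpansDiff P i j δ) (y : G) : ∃ g, s((i, y), (j, y + δ)) ∈ starEdges (develop P g) := by
  obtain ⟨y₀, a, t, ht, h⟩ := h
  refine ⟨y - y₀, mem_starEdges.2 ⟨a, t, ht, ?_⟩⟩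
  have := congrArg (Sym2.map (· + (0, y - y₀))) h
  simpa [develop, add_right_comm y₀ δ] using this

theorem isURD_of_base [Fintype G] [Finite A]
    (hP : Bijective fun p : A × Fin (n + 1) ↦ P p.1 p.2)
    {τ : Fin (n + 1) × G} (hτ : τ + τ = 0) (hτ0 : τ ≠ 0) (x : Fin (n + 1) → ℕ)
    (U : Fin (n + 1) → Fin (n + 1) → Finset G)
    (hU : ∀ i j, i < j → Fintype.card G ≤ x i + x j + #(U i j))
    (hcount : 2 * (n * (Fintype.card G + ∑ i, x i) + (n + 1)) =
      (n + 1) * ((n + 1) * Fintype.card G))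
    (hpure : ∀ i δ, δ ≠ 0 → (0, δ) = τ ∨ SpansDiff P i i δ)
    (hcross : ∀ i j, i < j → ∀ δ ∈ U i j, (j - i, δ) = τ ∨ SpansDiff P i j δ) :
    IsURD n ((n + 1) * Fintype.card G) 1 (Fintype.card G + ∑ i, x i) := by
  classical
  have := Fintype.ofFinite A
  have hM : IsOneFactor (univ.image fun p ↦ s(p, p + τ)) :=
    isOneFactor_image_of_involutive (fun p ↦ by rw [add_assoc, hτ, add_zero])
      fun p ↦ by simpa using hτ0
  have hcov {i j : Fin (n + 1)} {δ : G} (h : (j - i, δ) = τ ∨ SpansDiff P i j δ) (y : G) :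
      s((i, y), (j, y + δ)) ∈ univ.image (fun p ↦ s(p, p + τ)) ∨
        ∃ g, s((i, y), (j, y + δ)) ∈ starEdges (develop P g) := by
    refine h.imp ?_ fun h ↦ h.exists_mem_starEdges_develop y
    rintro rfl
    exact mem_image.2 ⟨(i, y), mem_univ _, by simp⟩
  refine isURD_of_rows hM (fun g ↦ isStarFactor_starEdges (develop_bijective hP g)) x U hU hcount
    (fun i y z hyz ↦ ?_) fun i j hij δ hδ ↦ hcov (hcross i j hij δ hδ)
  have hδ := hpure i (z - y) (sub_ne_zero.2 hyz.symm)
  rw [← sub_self i] at hδ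
  simpa using hcov hδ y

end Development

section Layout

variable {n : ℕ} {G β : Type*} [AddCommGroup G]

/-- Row `0` carries the sign `1` and every other row the sign `-1`. -/
def rowSign (r : Fin (n + 1)) : ℤˣ := if r = 0 then 1 else -1

theorem rowSign_smul_rowSign_smul (r : Fin (n + 1)) (g : G) :
    rowSign r • rowSign r • g = g := by
  rw [smul_smul, Int.units_mul_self, one_smul]

/-- The star factor of `Fin (n + 1) × G` built from the `n`-stars `b : β` with vertices `pos b t` in
relative rows `shift b t`: every row is the base row of one copy of each of these stars, row `r`
being read with the sign `rowSign r`, and each value `ξ` that is not a position gives the star with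
centre `(0, ξ)` and leaves `(t, -ξ)`. -/
def layoutFactor (pos : β → Fin (n + 1) → G) (shift : β → Fin (n + 1) → Fin (n + 1)) :
    (Fin (n + 1) × β) ⊕ {ξ // ξ ∉ Set.range (uncurry pos)} → Fin (n + 1) → Fin (n + 1) × G
  | .inl (i, b), t => (i + shift b t, rowSign (i + shift b t) • pos b t)
  | .inr ξ, t => (t, rowSign t • ξ)

variable {pos : β → Fin (n + 1) → G} {shift : β → Fin (n + 1) → Fin (n + 1)}

theorem layoutFactor_bijective (hpos : Injective (uncurry pos)) :
    Bijective fun p : ((Fin (n + 1) × β) ⊕ {ξ // ξ ∉ Set.range (uncurry pos)}) × Fin (n + 1) ↦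
      layoutFactor pos shift p.1 p.2 := by
  have hsign {r r' : Fin (n + 1)} {g g' : G} (h : (r, rowSign r • g) = (r', rowSign r' • g')) :
      r = r' ∧ g = g' := by
    obtain ⟨rfl, h⟩ := Prod.ext_iff.1 h
    exact ⟨rfl, MulAction.injective _ h⟩
  constructor
  · rintro ⟨⟨i, b⟩ | ξ, t⟩ ⟨⟨i', b'⟩ | ξ', t'⟩ h <;> obtain ⟨hr, hg⟩ := hsign h
    · obtain ⟨rfl, rfl⟩ := Prod.ext_iff.1 (@hpos (b, t) (b', t') hg)
      rw [add_right_cancel hr]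
    · exact (ξ'.2 ⟨(b, t), hg⟩).elim
    · exact (ξ.2 ⟨(b', t'), hg.symm⟩).elim
    · exact Prod.ext (congrArg Sum.inr (Subtype.ext hg)) hr
  · rintro ⟨r, z⟩
    by_cases hz : rowSign r • z ∈ Set.range (uncurry pos)
    · obtain ⟨⟨b, t⟩, h⟩ := hz
      replace h : pos b t = rowSign r • z := h
      exact ⟨(.inl (r - shift b t, b), t), by simp [layoutFactor, h, rowSign_smul_rowSign_smul]⟩
    · exact ⟨(.inr ⟨_, hz⟩, r), by simp [layoutFactor, rowSign_smul_rowSign_smul]⟩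

theorem spansDiff_layoutFactor (i : Fin (n + 1)) (b : β) {t : Fin (n + 1)} (ht : t ≠ 0) :
    SpansDiff (layoutFactor pos shift) (i + shift b 0) (i + shift b t)
      (rowSign (i + shift b t) • pos b t - rowSign (i + shift b 0) • pos b 0) :=
  spansDiff_sub (P := layoutFactor pos shift) (a := .inl (i, b)) ht

theorem spansDiff_layoutFactor_self (i : Fin (n + 1)) {b : β} {t : Fin (n + 1)} (ht : t ≠ 0)
    (hb : shift b t = shift b 0) {δ : G} (hδ : pos b t - pos b 0 = δ ∨ pos b t - pos b 0 = -δ) :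
    SpansDiff (layoutFactor pos shift) i i δ := by
  have h := spansDiff_layoutFactor (pos := pos) (shift := shift) (i - shift b 0) b ht
  rw [hb, sub_add_cancel, ← smul_sub] at h
  rcases Int.units_eq_one_or (rowSign i) with hi | hi <;> rcases hδ with hδ | hδ <;>
    rw [hi, hδ] at h
  · simpa using h
  · simpa using h.symm
  · simpa using h.symm
  · simpa using h

theorem spansDiff_layoutFactor_zero {ξ : G} (hξ : ξ ∉ Set.range (uncurry pos)) {j : Fin (n + 1)}
    (hj : j ≠ 0) : SpansDiff (layoutFactor pos shift) 0 j (-(ξ + ξ)) := by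
  have h := spansDiff_sub (P := layoutFactor pos shift) (a := .inr ⟨ξ, hξ⟩) hj
  simpa [layoutFactor, rowSign, hj, sub_eq_add_neg, add_comm] using h

theorem exists_finset_neg_double [Fintype G] [Fintype β] (hpos : Injective (uncurry pos))
    (hdouble : Set.InjOn (fun ξ ↦ ξ + ξ) (Set.range (uncurry pos))ᶜ) :
    ∃ D : Finset G, #D + (n + 1) * Fintype.card β = Fintype.card G ∧
      ∀ δ, δ ∈ D ↔ ∃ ξ ∉ Set.range (uncurry pos), -(ξ + ξ) = δ := by
  classical
  let free : Finset G := (univ.image (uncurry pos))ᶜ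
  have mem_free {ξ : G} : ξ ∈ free ↔ ξ ∉ Set.range (uncurry pos) := by
    rw [mem_compl, mem_image_univ_iff_mem_range]
  refine ⟨free.image fun ξ ↦ -(ξ + ξ), ?_, fun δ ↦ by simp only [mem_image, mem_free]⟩
  have hrange : #(univ.image (uncurry pos)) = (n + 1) * Fintype.card β := by
    rw [card_image_of_injective _ hpos, card_univ, Fintype.card_prod, Fintype.card_fin, mul_comm]
  rw [card_image_of_injOn, ← hrange, card_compl_add_card]
  exact fun ξ hξ ξ' hξ' h ↦ hdouble (mem_free.1 hξ) (mem_free.1 hξ') (neg_injective h)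

theorem isURD_of_layout [Fintype G] [Fintype β] (hpos : Injective (uncurry pos))
    (hdouble : Set.InjOn (fun ξ ↦ ξ + ξ) (Set.range (uncurry pos))ᶜ)
    {τ : Fin (n + 1) × G} (hτ : τ + τ = 0) (hτ0 : τ ≠ 0) {x₀ x : ℕ}
    (hx : x₀ + Fintype.card G = x + (n + 1) * Fintype.card β)
    (hcount : 2 * (n * (Fintype.card G + (x₀ + n * x)) + (n + 1)) =
      (n + 1) * ((n + 1) * Fintype.card G))
    (hpure : ∀ δ, δ ≠ 0 → (0, δ) = τ ∨ ∃ b, ∃ t ≠ 0, shift b t = shift b 0 ∧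
      (pos b t - pos b 0 = δ ∨ pos b t - pos b 0 = -δ))
    (hcross : ∀ i j, i < j → ∃ E : Finset G, Fintype.card G ≤ 2 * x + #E ∧ ∀ δ ∈ E,
      ((j - i, δ) = τ ∨ SpansDiff (layoutFactor pos shift) i j δ) ∧
      (i = 0 → ∀ ξ, ξ ∉ Set.range (uncurry pos) → -(ξ + ξ) ≠ δ)) :
    IsURD n ((n + 1) * Fintype.card G) 1 (Fintype.card G + (x₀ + n * x)) := by
  classical
  obtain ⟨D, hDcard, mem_D⟩ := exists_finset_neg_double hpos hdouble
  have hcross' (i j : Fin (n + 1)) : ∃ U : Finset G, i < j →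
      Fintype.card G ≤ (if i = 0 then x₀ else x) + x + #U ∧
      ∀ δ ∈ U, (j - i, δ) = τ ∨ SpansDiff (layoutFactor pos shift) i j δ := by
    by_cases hij : i < j
    swap
    · exact ⟨∅, fun h ↦ (hij h).elim⟩
    obtain ⟨E, hcard, hE⟩ := hcross i j hij
    by_cases hi : i = 0
    · subst hi
      have hDE : Disjoint D E := disjoint_left.2 fun δ hδ hδE ↦ by
        obtain ⟨ξ, hξ, rfl⟩ := (mem_D δ).1 hδ
        exact (hE _ hδE).2 rfl ξ hξ rfl
      refine ⟨D ∪ E, fun _ ↦ ⟨?_, fun δ hδ ↦ ?_⟩⟩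
      · rw [card_union_of_disjoint hDE, if_pos rfl]
        omega
      · rcases mem_union.1 hδ with hδ | hδ
        · obtain ⟨ξ, hξ, rfl⟩ := (mem_D δ).1 hδ
          exact .inr (spansDiff_layoutFactor_zero hξ hij.ne')
        · exact (hE δ hδ).1
    · exact ⟨E, fun _ ↦ ⟨by rw [if_neg hi]; omega, fun δ hδ ↦ (hE δ hδ).1⟩⟩
  choose U hU using hcross'
  have hsum : ∑ i : Fin (n + 1), (if i = 0 then x₀ else x) = x₀ + n * x := by
    simp [Fin.sum_univ_succ]
  rw [← hsum] at hcount ⊢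
  refine isURD_of_base (layoutFactor_bijective (shift := shift) hpos) hτ hτ0 _ U
    (fun i j hij ↦ ?_) hcount (fun i δ hδ ↦ ?_) fun i j hij ↦ (hU i j hij).2
  · rw [if_neg (Fin.ne_zero_of_lt hij)]
    exact (hU i j hij).1
  · refine (hpure δ hδ).imp_right fun ⟨b, t, ht, hb, h⟩ ↦ ?_
    exact spansDiff_layoutFactor_self i ht hb h

end Layout

section Cyclic

theorem exists_mul_add_eq {n κ d : ℕ} (hd : d ≠ 0) (hdκ : d ≤ n * κ) :
    ∃ (a : Fin κ) (t : Fin (n + 1)), t ≠ 0 ∧ a * n + t = d := by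
  have hn : 0 < n := Nat.pos_of_ne_zero (by rintro rfl; omega)
  have hmod := Nat.mod_lt (d - 1) hn
  refine ⟨⟨(d - 1) / n, Nat.div_lt_of_lt_mul (by omega)⟩, ⟨(d - 1) % n + 1, by omega⟩,
    Fin.ne_of_val_ne (Nat.succ_ne_zero _), ?_⟩
  have := Nat.div_add_mod' (d - 1) n
  simp only
  omega

theorem exists_natCast_eq_or_eq_neg {m : ℕ} [NeZero m] (δ : ZMod m) :
    ∃ d ≤ m / 2, (d : ZMod m) = δ ∨ (d : ZMod m) = -δ := by
  refine ⟨_, ZMod.natAbs_valMinAbs_le δ, ?_⟩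
  have hδ : (δ.valMinAbs : ZMod m) = δ := δ.coe_valMinAbs
  rcases Int.natAbs_eq δ.valMinAbs with h | h
  · rw [h, Int.cast_natCast] at hδ
    exact .inl hδ
  · rw [h, Int.cast_neg, Int.cast_natCast] at hδ
    exact .inr (neg_eq_iff_eq_neg.1 hδ)

theorem natCast_add_natCast_self (m : ℕ) : (m : ZMod (2 * m)) + m = 0 := by
  rw [← Nat.cast_add, ← two_mul, ZMod.natCast_self]

theorem add_self_injective_of_odd {m : ℕ} (hm : Odd m) : Injective fun ξ : ZMod m ↦ ξ + ξ := by
  intro ξ ξ' h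
  refine sub_eq_zero.1 ((ZMod.add_self_eq_zero_iff_eq_zero hm).1 ?_)
  linear_combination h

end Cyclic

theorem isURD_two_mul (n : ℕ) : IsURD n ((n + 1) * 2) 1 (n + 1) := by
  let M : Finset (Sym2 (Fin (n + 1) × ZMod 2)) := univ.image fun p ↦ s(p, p + (0, 1))
  have hM : IsOneFactor M := isOneFactor_image_of_involutive
    (fun p ↦ by simp [add_assoc, show (1 : ZMod 2) + 1 = 0 from rfl]) fun p ↦ by simp
  have hpure (i : Fin (n + 1)) (y z : ZMod 2) (hyz : y ≠ z) : s((i, y), (i, z)) ∈ M := by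
    obtain rfl : y + 1 = z := by revert y z; decide
    exact mem_image.2 ⟨(i, y), mem_univ _, by simp⟩
  have h := isURD_of_rows hM (F := fun e : Empty ↦ e.elim) (fun e ↦ e.elim) (fun _ ↦ 1)
    (fun _ _ ↦ ∅) (by simp) (by simp; ring) (fun i y z hyz ↦ .inl (hpure i y z hyz)) (by simp)
  simpa using h

section EvenMultiple

variable {n κ : ℕ}

/-- A representative of vertex `t` of star `a` modulo `n * κ + 1`, half the order of the group, in
the layout for an even multiplier `k' = 2 * κ`. On each star the leaves lie at the differences
`a * n + 1, …, a * n + n` from the centre, while all stars together cover a full set of residues. -/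
def evenResidue (n : ℕ) (a : Fin κ) (t : Fin (n + 1)) : ℤ :=
  if t = 0 then -a else a * (n - 1) + t

theorem evenResidue_zero (a : Fin κ) : evenResidue n a 0 = -a := if_pos rfl

theorem evenResidue_of_ne_zero (a : Fin κ) {t : Fin (n + 1)} (ht : t ≠ 0) :
    evenResidue n a t = a * (n - 1) + t := if_neg ht

theorem evenResidue_mem_Ioc (hn : n ≠ 0) (a : Fin κ) (t : Fin (n + 1)) :
    evenResidue n a t ∈ Set.Ioc (-κ : ℤ) (-κ + (n * κ + 1)) := by
  have ha := a.is_lt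
  have ht := t.is_le
  have hn : 1 ≤ n := Nat.one_le_iff_ne_zero.2 hn
  zify at ha ht hn
  by_cases h : t = 0
  · subst h
    rw [evenResidue_zero]
    constructor <;> nlinarith
  · rw [evenResidue_of_ne_zero a h]
    constructor <;> nlinarith

theorem exists_evenResidue_eq {z : ℤ} (hn : n ≠ 0) (hκ : κ ≠ 0)
    (hz : z ∈ Set.Ioc (-κ : ℤ) (-κ + (n * κ + 1))) :
    ∃ (a : Fin κ) (t : Fin (n + 1)), evenResidue n a t = z := by
  obtain ⟨m, rfl⟩ := Nat.exists_eq_succ_of_ne_zero hn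
  obtain ⟨hz_lb, hz_ub⟩ := hz
  push_cast at hz_ub
  rcases le_or_gt z 0 with hz0 | hz0
  · exact ⟨⟨z.natAbs, by omega⟩, 0, by rw [evenResidue_zero, Fin.val_mk]; omega⟩
  by_cases hzm : z ≤ m * κ
  · obtain ⟨a, t, ht, h⟩ := exists_mul_add_eq (n := m) (κ := κ) (d := z.toNat) (by omega)
      (by zify; omega)
    refine ⟨a, t.castSucc, ?_⟩
    rw [evenResidue_of_ne_zero _ (Fin.castSucc_ne_zero_iff.2 ht)]
    zify at h
    push_cast
    rw [Int.toNat_of_nonneg hz0.le] at h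
    simpa using h
  · refine ⟨⟨κ - 1, by omega⟩, Fin.last _, ?_⟩
    rw [evenResidue_of_ne_zero _ (Fin.last_pos.ne')]
    push_cast [Nat.one_le_iff_ne_zero.2 hκ]
    nlinarith

theorem evenResidue_inj (hn : 2 ≤ n) {a b : Fin κ} {t u : Fin (n + 1)}
    (h : evenResidue n a t = evenResidue n b u) (hab : (2 : ℤ) ∣ a - b) : a = b ∧ t = u := by
  have hn' : (2 : ℤ) ≤ n := by exact_mod_cast hn
  have leaf_pos (c : Fin κ) {r : Fin (n + 1)} (hr : r ≠ 0) : 0 < evenResidue n c r := by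
    have := Fin.pos_iff_ne_zero.2 hr
    rw [evenResidue_of_ne_zero c hr]
    have : (0 : ℤ) < r := by exact_mod_cast this
    nlinarith
  have centre_nonpos (c : Fin κ) : evenResidue n c 0 ≤ 0 := by simp [evenResidue_zero]
  by_cases ht : t = 0 <;> by_cases hu : u = 0
  · subst ht hu
    simp only [evenResidue_zero] at h
    exact ⟨Fin.ext (by omega), rfl⟩
  · subst ht
    exact ((leaf_pos b hu).not_ge (h ▸ centre_nonpos a)).elim
  · subst hu
    exact ((leaf_pos a ht).not_ge (h ▸ centre_nonpos b)).elim
  rw [evenResidue_of_ne_zero a ht, evenResidue_of_ne_zero b hu] at h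
  obtain ⟨c, hc⟩ := hab
  have hdvd : 2 * (n - 1 : ℤ) ∣ u - t := ⟨c, by linear_combination (n - 1 : ℤ) * hc - h⟩
  have htu : (u - t : ℤ) = 0 := by
    refine Int.eq_zero_of_abs_lt_dvd hdvd (abs_lt.2 ?_)
    have := Fin.pos_iff_ne_zero.2 ht
    have := Fin.pos_iff_ne_zero.2 hu
    omega
  have hab : (n - 1 : ℤ) * (a - b) = 0 := by linear_combination h + htu
  refine ⟨Fin.ext ?_, Fin.ext (by omega)⟩
  have := (mul_eq_zero.1 hab).resolve_left (by omega)
  omega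

/-- The vertex `t` of star `a` in the layout over `ZMod (2 * (n * κ + 1))` for an even multiplier
`k' = 2 * κ`. The first summand selects one of the two lifts of a residue modulo `n * κ + 1` by the
parity of `a`, which keeps the differences inside each star. -/
def evenPos (n κ : ℕ) (a : Fin κ) (t : Fin (n + 1)) : ZMod (2 * (n * κ + 1)) :=
  ((a * (n * κ + 1) + evenResidue n a t : ℤ) : ZMod (2 * (n * κ + 1)))

theorem evenPos_sub_evenPos_zero (a : Fin κ) {t : Fin (n + 1)} (ht : t ≠ 0) :
    evenPos n κ a t - evenPos n κ a 0 = ((a * n + t : ℕ) : ZMod (2 * (n * κ + 1))) := by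
  rw [evenPos, evenPos, evenResidue_zero, evenResidue_of_ne_zero a ht]
  push_cast
  ring

theorem evenPos_injective (hn : 2 ≤ n) : Injective (uncurry (evenPos n κ)) := by
  rintro ⟨a, t⟩ ⟨b, u⟩ h
  obtain ⟨c, hc⟩ := (ZMod.intCast_eq_intCast_iff_dvd_sub _ _ _).1 h
  push_cast at hc
  have hres : evenResidue n a t = evenResidue n b u := by
    obtain ⟨ha, ha'⟩ := evenResidue_mem_Ioc (by omega) a t
    obtain ⟨hb, hb'⟩ := evenResidue_mem_Ioc (by omega) b u
    have hdvd : (n * κ + 1 : ℤ) ∣ evenResidue n b u - evenResidue n a t :=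
      ⟨2 * c + a - b, by linear_combination hc⟩
    have := Int.eq_zero_of_abs_lt_dvd hdvd (abs_lt.2 (by constructor <;> linarith))
    linarith
  have hN : (n * κ + 1 : ℤ) ≠ 0 := by positivity
  have hab : (2 : ℤ) ∣ a - b := ⟨-c, mul_left_cancel₀ hN (by linear_combination -hc - hres)⟩
  obtain ⟨rfl, rfl⟩ := evenResidue_inj hn hres hab
  rfl

theorem exists_evenPos_add (hn : n ≠ 0) (hκ : κ ≠ 0) (ξ : ZMod (2 * (n * κ + 1))) :
    ∃ p, ξ = uncurry (evenPos n κ) p ∨ ξ = uncurry (evenPos n κ) p + (n * κ + 1 : ℕ) := by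
  obtain ⟨c, rfl⟩ := ZMod.intCast_surjective ξ
  have hN : (0 : ℤ) < n * κ + 1 := by positivity
  obtain ⟨a, t, h⟩ := exists_evenResidue_eq hn hκ (toIocMod_mem_Ioc hN (-κ) c)
  have hc := toIocMod_add_toIocDiv_zsmul hN (-κ) c
  rw [← h, smul_eq_mul] at hc
  set q := toIocDiv hN (-κ) c
  refine ⟨(a, t), ?_⟩
  simp only [uncurry_apply_pair, evenPos, ← Int.cast_natCast (R := ZMod (2 * (n * κ + 1))),
    ← Int.cast_add, ZMod.intCast_eq_intCast_iff_dvd_sub]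
  push_cast
  rcases Int.even_or_odd' (q - a) with ⟨k, hk | hk⟩
  · exact .inl ⟨-k, by linear_combination hc - (n * κ + 1 : ℤ) * hk⟩
  · exact .inr ⟨-k, by linear_combination hc - (n * κ + 1 : ℤ) * hk⟩

theorem injOn_add_self_compl_range_evenPos (hn : n ≠ 0) (hκ : κ ≠ 0) :
    Set.InjOn (fun ξ ↦ ξ + ξ) (Set.range (uncurry (evenPos n κ)))ᶜ := by
  intro ξ hξ ξ' hξ' h
  have hdiff : -(ξ - ξ') = ξ - ξ' := by linear_combination -h
  rcases (ZMod.neg_eq_self_iff _).1 hdiff with h0 | hval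
  · exact sub_eq_zero.1 h0
  have hhalf : ξ - ξ' = (n * κ + 1 : ℕ) := by
    rw [← ZMod.natCast_zmod_val (ξ - ξ'), Nat.eq_of_mul_eq_mul_left two_pos hval]
  obtain ⟨p, rfl | rfl⟩ := exists_evenPos_add hn hκ ξ'
  · exact (hξ' ⟨p, rfl⟩).elim
  · refine (hξ ⟨p, ?_⟩).elim
    linear_combination -hhalf - natCast_add_natCast_self (n * κ + 1)

theorem exists_evenPos_sub_eq {δ : ZMod (2 * (n * κ + 1))} (hδ : δ ≠ 0)
    (hδN : δ ≠ (n * κ + 1 : ℕ)) :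
    ∃ a, ∃ t ≠ 0, evenPos n κ a t - evenPos n κ a 0 = δ ∨
      evenPos n κ a t - evenPos n κ a 0 = -δ := by
  obtain ⟨d, hd, h⟩ := exists_natCast_eq_or_eq_neg δ
  have hd0 : d ≠ 0 := by
    rintro rfl
    simp [eq_comm, hδ] at h
  have hdN : d ≠ n * κ + 1 := by
    rintro rfl
    refine hδN (h.elim Eq.symm fun h ↦ ?_)
    linear_combination h - natCast_add_natCast_self (n * κ + 1)
  obtain ⟨a, t, ht, rfl⟩ := exists_mul_add_eq (n := n) (κ := κ) hd0 (by omega)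
  exact ⟨a, t, ht, by rwa [evenPos_sub_evenPos_zero a ht]⟩

theorem isURD_even (hn : 2 ≤ n) (hκ : κ ≠ 0) :
    IsURD n ((n + 1) * (2 * (n * κ + 1))) 1 ((n + 1) * ((n + 1) * κ + 1)) := by
  have hn0 : n ≠ 0 := by omega
  set N := n * κ + 1 with hN
  have hcard : Fintype.card (ZMod (2 * N)) = 2 * N := ZMod.card _
  have hs : 2 * N + (κ - 1 + n * N) = (n + 1) * ((n + 1) * κ + 1) := by
    zify [Nat.one_le_iff_ne_zero.2 hκ, hN]
    ring
  have hpure (δ : ZMod (2 * N)) (hδ : δ ≠ 0) : (0, δ) = ((0, N) : Fin (n + 1) × ZMod (2 * N)) ∨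
      ∃ a : Fin κ, ∃ t : Fin (n + 1), t ≠ 0 ∧ (0 : Fin (n + 1)) = 0 ∧
        (evenPos n κ a t - evenPos n κ a 0 = δ ∨ evenPos n κ a t - evenPos n κ a 0 = -δ) := by
    rcases eq_or_ne δ N with rfl | hδN
    · exact .inl rfl
    · obtain ⟨a, t, ht, h⟩ := exists_evenPos_sub_eq hδ hδN
      exact .inr ⟨a, t, ht, rfl, h⟩
  have hτ0 : ((0, N) : Fin (n + 1) × ZMod (2 * N)) ≠ 0 := by
    rw [Ne, Prod.ext_iff, not_and]
    intro _ h
    have := Nat.le_of_dvd (by omega) ((ZMod.natCast_eq_zero_iff N (2 * N)).1 h)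
    omega
  have h := isURD_of_layout (x₀ := κ - 1) (x := N) (evenPos_injective hn)
    (injOn_add_self_compl_range_evenPos hn0 hκ) (shift := fun _ _ ↦ 0)
    (by rw [Prod.mk_add_mk, natCast_add_natCast_self]; rfl) hτ0
    (by rw [hcard, Fintype.card_fin, add_one_mul]; omega) (by rw [hcard, hs, hN]; ring) hpure
    fun i j _ ↦ ⟨∅, by rw [hcard]; simp, by simp⟩
  rwa [hcard, hs] at h

end EvenMultiple

section OddMultiple

variable {e κ : ℕ}

/-- A representative of vertex `t` of each star in the layout for an odd multiplier
`k' = 2 * κ + 1`, where `n = 2 * e + 1` and the group has the odd order `2 * (n * κ + e + 1) + 1`.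
The leaves of the stars `some a` lie at the even differences `2 * (a * n + t)` from the centre. The
extra star `none` has centre `0` and continues with the next even numbers for `t ≤ e + 1`, then with
odd ones. Doubling is invertible, so the even differences suffice up to sign. -/
def oddResidue (e κ : ℕ) : Option (Fin κ) → Fin (2 * e + 1 + 1) → ℤ
  | some a, t => if t = 0 then κ - a else κ - a + 2 * (a * (2 * e + 1) + t)
  | none, t => if t = 0 then 0 else if (t : ℕ) ≤ e + 1 then 2 * ((2 * e + 1) * κ + t)
      else 2 * ((2 * e + 1) * κ + t - e) - 1

/-- The relative row of vertex `t` of each star in the layout for an odd multiplier: each star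
lies in a single row, except for the last `e` leaves of the star `none`. -/
def oddShift (e κ : ℕ) : Option (Fin κ) → Fin (2 * e + 1 + 1) → Fin (2 * e + 1 + 1)
  | some _, _ => 0
  | none, t => ⟨t - (e + 1), by omega⟩

theorem oddResidue_some_of_ne_zero (a : Fin κ) {t : Fin (2 * e + 1 + 1)} (ht : t ≠ 0) :
    oddResidue e κ (some a) t = κ - a + 2 * (a * (2 * e + 1) + t) := if_neg ht

theorem oddResidue_some_mem_Icc (a : Fin κ) (t : Fin (2 * e + 1 + 1)) :
    oddResidue e κ (some a) t ∈ Set.Icc 1 (2 * ((2 * e + 1) * κ) + 1 : ℤ) := by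
  have ha : (a + 1 : ℤ) ≤ κ := by exact_mod_cast a.is_lt
  have ht : (t : ℤ) ≤ 2 * e + 1 := by exact_mod_cast t.is_le
  have : 0 ≤ (e : ℤ) * (κ - a - 1) := mul_nonneg (by positivity) (by linarith)
  have : 0 ≤ (e : ℤ) * a := by positivity
  simp only [oddResidue]
  split_ifs <;> constructor <;> nlinarith

theorem oddResidue_none_mem_Icc {t : Fin (2 * e + 1 + 1)} (ht : t ≠ 0) :
    oddResidue e κ none t ∈
      Set.Icc (2 * ((2 * e + 1) * κ) + 2 : ℤ) (2 * ((2 * e + 1) * κ) + 2 * e + 2) := by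
  have := Fin.pos_iff_ne_zero.2 ht
  have := t.is_lt
  simp only [oddResidue, if_neg ht]
  split_ifs <;> constructor <;> omega

theorem oddResidue_some_zero_lt (a b : Fin κ) {t : Fin (2 * e + 1 + 1)} (ht : t ≠ 0) :
    oddResidue e κ (some a) 0 < oddResidue e κ (some b) t := by
  have : (0 : ℤ) < t := by exact_mod_cast Fin.pos_iff_ne_zero.2 ht
  have : 0 ≤ (e : ℤ) * b := by positivity
  rw [oddResidue_some_of_ne_zero b ht]
  simp only [oddResidue, if_true]
  linarith

theorem oddResidue_some_inj {a b : Fin κ} {t u : Fin (2 * e + 1 + 1)}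
    (h : oddResidue e κ (some a) t = oddResidue e κ (some b) u) : a = b ∧ t = u := by
  by_cases ht : t = 0 <;> by_cases hu : u = 0
  · subst ht hu
    simp only [oddResidue, if_true] at h
    exact ⟨Fin.ext (by omega), rfl⟩
  · subst ht
    exact ((oddResidue_some_zero_lt a b hu).ne h).elim
  · subst hu
    exact ((oddResidue_some_zero_lt b a ht).ne' h).elim
  rw [oddResidue_some_of_ne_zero a ht, oddResidue_some_of_ne_zero b hu] at h
  have hdvd : (4 * e + 1 : ℤ) ∣ 2 * (u - t) := ⟨a - b, by linear_combination -h⟩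
  have htu : 2 * (u - t : ℤ) = 0 := by
    refine Int.eq_zero_of_abs_lt_dvd hdvd (abs_lt.2 ?_)
    have := Fin.pos_iff_ne_zero.2 ht
    have := Fin.pos_iff_ne_zero.2 hu
    omega
  have hab : (4 * e + 1 : ℤ) * (a - b) = 0 := by linear_combination h + htu
  refine ⟨Fin.ext ?_, Fin.ext (by omega)⟩
  have := (mul_eq_zero.1 hab).resolve_left (by positivity)
  omega

theorem oddResidue_none_injective : Injective (oddResidue e κ none) := by
  intro t u h
  simp only [oddResidue] at h
  have := t.is_lt
  have := u.is_lt
  have : (0 : ℤ) ≤ (2 * e + 1) * κ := by positivity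
  refine Fin.ext ?_
  simp only [Fin.ext_iff, Fin.val_zero] at h
  split_ifs at h <;> omega

theorem oddResidue_injective : Injective (uncurry (oddResidue e κ)) := by
  have hne (a : Fin κ) (t u) : oddResidue e κ (some a) t ≠ oddResidue e κ none u := by
    have := oddResidue_some_mem_Icc a t
    rcases eq_or_ne u 0 with rfl | hu
    · exact (zero_lt_one.trans_le this.1).ne'
    · have := oddResidue_none_mem_Icc (κ := κ) hu
      grind
  rintro ⟨_ | a, t⟩ ⟨_ | b, u⟩ h
  · exact congrArg _ (oddResidue_none_injective h)
  · exact (hne b u t h.symm).elim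
  · exact (hne a t u h).elim
  · obtain ⟨rfl, rfl⟩ := oddResidue_some_inj h
    rfl

theorem oddResidue_mem_Ico (b : Option (Fin κ)) (t : Fin (2 * e + 1 + 1)) :
    oddResidue e κ b t ∈ Set.Ico 0 (2 * ((2 * e + 1) * κ + e + 1) + 1 : ℤ) := by
  rcases b with _ | a
  · rcases eq_or_ne t 0 with rfl | ht
    · exact ⟨le_rfl, by simp only [oddResidue, if_true]; positivity⟩
    · have := oddResidue_none_mem_Icc (κ := κ) ht
      constructor <;> nlinarith [this.1, this.2]
  · have := oddResidue_some_mem_Icc a t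
    constructor <;> linarith [this.1, this.2]

theorem exists_oddResidue_sub_eq {d : ℕ} (hd : d ≠ 0) (hd' : d ≤ (2 * e + 1) * κ + e + 1) :
    ∃ b, ∃ t ≠ 0, oddShift e κ b t = oddShift e κ b 0 ∧
      oddResidue e κ b t - oddResidue e κ b 0 = d + d := by
  by_cases hdκ : d ≤ (2 * e + 1) * κ
  · obtain ⟨a, t, ht, rfl⟩ := exists_mul_add_eq hd hdκ
    refine ⟨some a, t, ht, rfl, ?_⟩
    rw [oddResidue_some_of_ne_zero a ht]
    simp only [oddResidue, if_true]
    push_cast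
    ring
  · obtain ⟨c, rfl⟩ := Nat.exists_eq_add_of_lt (not_le.1 hdκ)
    have ht : (⟨c + 1, by omega⟩ : Fin (2 * e + 1 + 1)) ≠ 0 := Fin.ne_of_val_ne c.succ_ne_zero
    refine ⟨none, _, ht, Fin.ext ?_, ?_⟩
    · simp only [oddShift, Fin.val_zero]
      omega
    · simp only [oddResidue, if_true, if_neg ht]
      rw [if_pos (by omega)]
      push_cast
      ring

theorem exists_oddResidue_none_eq {u : ℕ} (hue : u ≤ e) :
    ∃ t, oddResidue e κ none t = 2 * ((2 * e + 1) * κ) + u + e + 2 := by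
  rcases Nat.even_or_odd' (u + e) with ⟨k, hk | hk⟩
  · have ht : (⟨k + 1, by omega⟩ : Fin (2 * e + 1 + 1)) ≠ 0 := Fin.ne_of_val_ne (by simp)
    refine ⟨⟨k + 1, by omega⟩, ?_⟩
    simp only [oddResidue, if_neg ht]
    rw [if_pos (by omega)]
    push_cast
    omega
  · have ht : (⟨e + k + 2, by omega⟩ : Fin (2 * e + 1 + 1)) ≠ 0 := Fin.ne_of_val_ne (by simp)
    refine ⟨⟨e + k + 2, by omega⟩, ?_⟩
    simp only [oddResidue, if_neg ht]
    rw [if_neg (by omega)]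
    push_cast
    omega

/-- The cyclic group of the layout for an odd multiplier `k' = 2 * κ + 1`, with `n = 2 * e + 1`. -/
abbrev OddGroup (e κ : ℕ) : Type := ZMod (2 * ((2 * e + 1) * κ + e + 1) + 1)

/-- The vertex `t` of each star in the layout for an odd multiplier. -/
def oddPos (e κ : ℕ) (b : Option (Fin κ)) (t : Fin (2 * e + 1 + 1)) : OddGroup e κ :=
  (oddResidue e κ b t : ℤ)

theorem oddPos_injective : Injective (uncurry (oddPos e κ)) := by
  rintro ⟨b, t⟩ ⟨c, u⟩ h
  refine oddResidue_injective (sub_eq_zero.1 (Int.eq_zero_of_abs_lt_dvd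
    ((ZMod.intCast_eq_intCast_iff_dvd_sub _ _ _).1 h.symm) (abs_lt.2 ?_)))
  have hb := oddResidue_mem_Ico b t
  have hc := oddResidue_mem_Ico c u
  push_cast
  simp only [uncurry_apply_pair]
  constructor <;> linarith [hb.1, hb.2, hc.1, hc.2]

theorem oddPos_none_zero : oddPos e κ none 0 = 0 := by
  simp only [oddPos, oddResidue, if_true, Int.cast_zero]

theorem exists_oddPos_sub_eq {δ : OddGroup e κ} (hδ : δ ≠ 0) :
    ∃ b, ∃ t ≠ 0, oddShift e κ b t = oddShift e κ b 0 ∧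
      (oddPos e κ b t - oddPos e κ b 0 = δ ∨ oddPos e κ b t - oddPos e κ b 0 = -δ) := by
  obtain ⟨η, rfl⟩ := Finite.surjective_of_injective (add_self_injective_of_odd ⟨_, rfl⟩) δ
  obtain ⟨d, hd, h⟩ := exists_natCast_eq_or_eq_neg η
  have hd0 : d ≠ 0 := by
    rintro rfl
    rw [Nat.cast_zero, zero_eq_neg, eq_comm, or_self] at h
    exact hδ (by simp [h])
  obtain ⟨b, t, ht, hb, hsub⟩ := exists_oddResidue_sub_eq (e := e) (κ := κ) hd0 (by omega)
  have hdiff : oddPos e κ b t - oddPos e κ b 0 = d + d := by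
    rw [oddPos, oddPos, ← Int.cast_sub, hsub]
    push_cast
    rfl
  refine ⟨b, t, ht, hb, ?_⟩
  rw [hdiff]
  rcases h with h | h
  · exact .inl (by rw [h])
  · exact .inr (by rw [h, neg_add])

theorem spansDiff_oddPos (i : Fin (2 * e + 1 + 1)) {u : Fin (2 * e + 1 + 1)} (hu : u ≠ 0)
    (hue : (u : ℕ) ≤ e) :
    SpansDiff (layoutFactor (oddPos e κ) (oddShift e κ)) i (i + u)
      (rowSign (i + u) • ((2 * ((2 * e + 1) * κ + u) + 1 : ℕ) : OddGroup e κ)) := by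
  have hu' := Fin.pos_iff_ne_zero.2 hu
  have ht : (⟨e + 1 + u, by omega⟩ : Fin (2 * e + 1 + 1)) ≠ 0 := Fin.ne_of_val_ne (by simp)
  have h := spansDiff_layoutFactor (pos := oddPos e κ) (shift := oddShift e κ) i none ht
  have hzero : oddShift e κ none 0 = 0 := Fin.ext (Nat.zero_sub _)
  have hleaf : oddShift e κ none ⟨e + 1 + u, by omega⟩ = u := Fin.ext (Nat.add_sub_cancel_left ..)
  have hpos : oddPos e κ none ⟨e + 1 + u, by omega⟩ =
      ((2 * ((2 * e + 1) * κ + u) + 1 : ℕ) : OddGroup e κ) := by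
    simp only [oddPos, oddResidue, if_neg ht]
    rw [if_neg (by omega)]
    push_cast
    ring
  rwa [hzero, hleaf, hpos, oddPos_none_zero, smul_zero, sub_zero, add_zero] at h

theorem exists_oddPos_add_self_eq {u : ℕ} (hue : u ≤ e) :
    ∃ t, oddPos e κ none t + oddPos e κ none t =
      ((2 * ((2 * e + 1) * κ + u) + 1 : ℕ) : OddGroup e κ) := by
  obtain ⟨t, ht⟩ := exists_oddResidue_none_eq (κ := κ) hue
  refine ⟨t, ?_⟩
  rw [oddPos, ht, ← Int.cast_natCast (R := OddGroup e κ), ← Int.cast_add,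
    ZMod.intCast_eq_intCast_iff_dvd_sub]
  exact ⟨-1, by push_cast; ring⟩

theorem exists_spansDiff_oddPos {i j : Fin (2 * e + 1 + 1)} (hij : i < j) :
    ∃ δ : OddGroup e κ, ((j - i, δ) = (⟨e + 1, by omega⟩, 0) ∨
        SpansDiff (layoutFactor (oddPos e κ) (oddShift e κ)) i j δ) ∧
      (i = 0 → ∃ t, oddPos e κ none t + oddPos e κ none t = -δ) := by
  have hj : j ≠ 0 := Fin.ne_zero_of_lt hij
  have hji : ((j - i : Fin _) : ℕ) = j - i := Fin.sub_val_of_le hij.le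
  have hij' : ((i - j : Fin _) : ℕ) = 2 * e + 1 + 1 + i - j := Fin.coe_sub_iff_lt.2 hij
  rcases lt_trichotomy ((j - i : Fin _) : ℕ) (e + 1) with h | h | h
  · have hspan := spansDiff_oddPos (κ := κ) i (sub_ne_zero.2 hij.ne') (Nat.lt_succ_iff.1 h)
    rw [add_sub_cancel] at hspan
    obtain ⟨t, ht⟩ := exists_oddPos_add_self_eq (κ := κ) (Nat.lt_succ_iff.1 h)
    refine ⟨_, .inr hspan, fun _ ↦ ⟨t, ?_⟩⟩
    rw [ht, rowSign, if_neg hj, Units.neg_smul, one_smul, neg_neg]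
  · exact ⟨0, .inl (Prod.ext (Fin.ext h) rfl), fun _ ↦ ⟨0, by simp [oddPos_none_zero]⟩⟩
  · have hu : ((i - j : Fin _) : ℕ) ≤ e := by omega
    have hspan := (spansDiff_oddPos (κ := κ) j (sub_ne_zero.2 hij.ne) hu).symm
    rw [add_sub_cancel] at hspan
    refine ⟨_, .inr hspan, ?_⟩
    rintro rfl
    simpa [rowSign] using exists_oddPos_add_self_eq (κ := κ) hu

theorem isURD_odd (e κ : ℕ) :
    IsURD (2 * e + 1) ((2 * e + 1 + 1) * (2 * ((2 * e + 1) * κ + e + 1) + 1)) 1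
      ((2 * e + 1 + 1) * ((2 * e + 1 + 1) * κ + e + 2)) := by
  have hinj := add_self_injective_of_odd (m := 2 * ((2 * e + 1) * κ + e + 1) + 1) ⟨_, rfl⟩
  have hcard : Fintype.card (OddGroup e κ) = 2 * ((2 * e + 1) * κ + e + 1) + 1 := ZMod.card _
  have hs : 2 * ((2 * e + 1) * κ + e + 1) + 1 + (κ + e + (2 * e + 1) * ((2 * e + 1) * κ + e + 1)) =
      (2 * e + 1 + 1) * ((2 * e + 1 + 1) * κ + e + 2) := by ring
  have hτ : (((⟨e + 1, by omega⟩, 0) : Fin (2 * e + 1 + 1) × OddGroup e κ) + (⟨e + 1, by omega⟩, 0))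
      = 0 := by
    refine Prod.ext (Fin.ext ?_) (add_zero 0)
    simp [Fin.val_add, show e + 1 + (e + 1) = 2 * e + 1 + 1 by ring]
  have h := isURD_of_layout (x₀ := κ + e) (x := (2 * e + 1) * κ + e + 1)
    (oddPos_injective (e := e) (κ := κ)) hinj.injOn hτ
    (fun h ↦ by simpa using congrArg Prod.fst h)
    (by rw [hcard, Fintype.card_option, Fintype.card_fin]; ring) (by rw [hcard, hs]; ring)
    (fun δ hδ ↦ .inr (exists_oddPos_sub_eq hδ)) fun i j hij ↦ ?_
  · rwa [hcard, hs] at h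
  · obtain ⟨δ, hspan, hzero⟩ := exists_spansDiff_oddPos (κ := κ) hij
    refine ⟨{δ}, by rw [hcard, card_singleton], fun δ' hδ' ↦ ?_⟩
    obtain rfl := mem_singleton.1 hδ'
    refine ⟨hspan, ?_⟩
    rintro hi ξ hξ rfl
    obtain ⟨t, ht⟩ := hzero hi
    rw [neg_neg] at ht
    exact hξ ⟨(none, t), hinj ht⟩

end OddMultiple

theorem urd_exists_general (n : ℕ) (hn : 2 ≤ n) (k' v : ℕ)
    (hv : v = n * (n + 1) * k' + 2 * (n + 1))
    (s : ℕ) (hs : 2 * n * s = (v - 2) * (n + 1)) :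
    IsURD n v 1 s := by
  have hv2 : v - 2 = n * ((n + 1) * k' + 2) := Nat.sub_eq_of_eq_add (by rw [hv]; ring)
  have hs2 : 2 * s = (n + 1) * ((n + 1) * k' + 2) := by
    refine Nat.eq_of_mul_eq_mul_left (by omega : 0 < n) ?_
    rw [← mul_assoc, mul_comm n 2, hs, hv2]
    ring
  obtain ⟨κ, rfl | rfl⟩ := Nat.even_or_odd' k'
  · obtain rfl : s = (n + 1) * ((n + 1) * κ + 1) := by linarith
    obtain rfl | hκ := eq_or_ne κ 0
    · simpa [hv, mul_comm] using isURD_two_mul n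
    · convert isURD_even hn hκ using 1
      rw [hv]
      ring
  · obtain ⟨e, rfl | rfl⟩ := Nat.even_or_odd' n
    · have hodd : Odd ((2 * e + 1) * ((2 * e + 1) * (2 * κ + 1) + 2)) := by
        simp [parity_simps]
      exact (Nat.not_odd_iff_even.2 ⟨s, by rw [← hs2, two_mul]⟩ hodd).elim
    · obtain rfl : s = (2 * e + 1 + 1) * ((2 * e + 1 + 1) * κ + e + 2) := by linarith
      convert isURD_odd e κ using 1
      rw [hv]
      ring

/-- For odd `n ≥ 3` and `v = n(n+1)k' + 2(n+1)` with `k' ≥ 0`, a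
`(K_2, K_{1,n})`-URD`(v; 1, s)` exists, where `s = (v-2)(n+1)/(2n)`. -/
theorem urd_exists (n : ℕ) (hn : 3 ≤ n) (hodd : Odd n) (k' v : ℕ)
    (hv : v = n * (n + 1) * k' + 2 * (n + 1))
    (s : ℕ) (hs : 2 * n * s = (v - 2) * (n + 1)) :
    IsURD n v 1 s :=
  urd_exists_general n (by omega) k' v hv s hs
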